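/- arXiv:2305.13838 — 2 statements merged into one kernel-verified Lean document; each statement's English description precedes it below -/
import Mathlib

section
/- Let q = 2^r with q ≡ 1 (mod 3), and let γ ∈ F_q \ {0,1}. Let R be the number of pairs (x,y) ∈ F_q² with γ(x²y + xy²) + x² + x + y² + y + (γ+1)xy = 0. Then q − 2√q − 2 ≤ R ≤ q + 2√q − 2. -/
/-!
The proof is Manin's elementary argument for the Hasse bound, carried out in characteristic two.

Put `A = 1 / (γ + 1)`, `b = A ^ 4 * γ`, `q = 2 ^ r`. With `s = x + y`, the substitution
`a = A ^ 2 * γ + A / s`, `w = x / s` turns the cubic, away from the origin, into the Artin–Schreier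
curve `w ^ 2 + w = (a ^ 2 + A * a + b) / a` away from `a = A ^ 2 * γ`; over that value of `a` the
latter has two points. Hence `R + 1 = 2 * M`, where `M` counts the `a ≠ 0` at which the absolute
trace of `(a ^ 2 + A * a + b) / a` vanishes (`card_cubic_add_one`, `card_cover`).

To estimate `M`, consider over the rational function field `F(t)` the ordinary elliptic curve
`y ^ 2 + x * y = x ^ 3 + (t + b / t) * x ^ 2 + b ^ 2`. It carries the points `P = (t, b)` and
`Q = (t ^ q, b + S)`, where `S` is `t ^ q` times the formal trace of `(t ^ 2 + A * t + b) / t`.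
The degree of the `x`-coordinate, as a rational function of `t`, is an exact quadratic form on the
group of points (`height_parallelogram`): no limit as for the canonical height is needed, because
the `x`-addition formulas of this curve are polynomial with coefficients in the constants and
primitive. Nonnegativity of this form on the span of `P` and `Q` bounds its discriminant (`discr_le`).
The height of `P` is `1`, that of `Q` is `q`, and that of `Q - P` is `2 * M + 2`, since the
cancellation in the `x`-coordinate of `Q - P` occurs at the zeros of `t ^ q - t` with nonzero trace
and at `0` (`exists_reduced_form`). This gives `(2 * M + 2 - q - 1) ^ 2 ≤ 4 * q`.
-/

namespace HasseTwo

/-! ### The curve `y² + xy = x³ + Dx² + β` in characteristic two -/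

open WeierstrassCurve WeierstrassCurve.Affine

section Curve
variable {K : Type*} [Field K] [DecidableEq K] [CharP K 2]

/-- The curve `y ^ 2 + x * y = x ^ 3 + D * x ^ 2 + β`; its quadratic twists are obtained by
changing `D`. -/
def twist (D β : K) : WeierstrassCurve.Affine K := ⟨1, D, 0, 0, β⟩

lemma nonsingular_twist {D β x y : K} (hβ : β ≠ 0)
    (h : y ^ 2 + x * y = x ^ 3 + D * x ^ 2 + β) : (twist D β).Nonsingular x y := by
  have h2 : (2 : K) = 0 := CharTwo.two_eq_zero
  rw [nonsingular_iff, equation_iff]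
  refine ⟨by simp only [twist]; linear_combination h, ?_⟩
  by_contra hc
  simp only [twist, not_or, not_not, ne_eq] at hc
  grind

omit [DecidableEq K] [CharP K 2] in
lemma twist_equation {D β x y : K} (h : (twist D β).Nonsingular x y) :
    y ^ 2 + x * y = x ^ 3 + D * x ^ 2 + β := by
  have := (equation_iff ..).1 h.1
  simp only [twist] at this
  linear_combination this

/-- The `x`-coordinate of `2 * P` is `(x ^ 4 + β) / x ^ 2`, in homogeneous coordinates. The
parameter `D` does not occur, which is why heights over `F(t)` behave as over the constants. -/
lemma xRep_double {D β : K} (hβ : β ≠ 0) (P : (twist D β).Point) :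
    ∃ c : K, c ≠ 0 ∧ (P + P).xRep 0 = c * ((P.xRep 0 ^ 2) ^ 2 + β * (P.xRep 1 ^ 2) ^ 2) ∧
      (P + P).xRep 1 = c * (P.xRep 0 ^ 2 * P.xRep 1 ^ 2) := by
  have h2 : (2 : K) = 0 := CharTwo.two_eq_zero
  match P with
  | 0 => exact ⟨1, one_ne_zero, by simp, by simp⟩
  | .some x y h =>
    have he := twist_equation h
    by_cases hx : x = 0
    · have hy : y = (twist D β).negY x y := by simp [negY, twist, hx]; grind
      rw [Point.add_self_of_Y_eq hy]
      refine ⟨β⁻¹, inv_ne_zero hβ, ?_, ?_⟩ <;> simp [hx, hβ]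
    · have hy : y ≠ (twist D β).negY x y := by simp [negY, twist]; grind
      rw [Point.add_self_of_Y_ne hy]
      refine ⟨(x ^ 2)⁻¹, by simp [hx], ?_, ?_⟩
      · rw [Point.xRep_some, Point.xRep_some, slope_of_Y_ne rfl hy]
        simp only [addX, negY, twist, Matrix.cons_val_zero, Matrix.cons_val_one]
        have : y - (-y - 1 * x - 0) = x := by linear_combination y * h2
        rw [this]
        field_simp
        grind
      · simp [hx]

/-- The symmetric functions of `x (P + Q)` and `x (P - Q)` in terms of `x P` and `x Q`, in
homogeneous coordinates and up to a common scalar. Again `D` does not occur. -/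
theorem xRep_add_sub {D β : K} (hβ : β ≠ 0) (P Q : (twist D β).Point) :
    ∃ c : K, c ≠ 0 ∧
      (P + Q).xRep 0 * (P - Q).xRep 0 =
        c * ((P.xRep 0 * Q.xRep 0) ^ 2 + β * (P.xRep 1 * Q.xRep 1) ^ 2) ∧
      (P + Q).xRep 0 * (P - Q).xRep 1 + (P + Q).xRep 1 * (P - Q).xRep 0 =
        c * ((P.xRep 0 * Q.xRep 0) * (P.xRep 1 * Q.xRep 1)) ∧
      (P + Q).xRep 1 * (P - Q).xRep 1 =
        c * (P.xRep 0 * Q.xRep 1 + P.xRep 1 * Q.xRep 0) ^ 2 := by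
  have h2 : (2 : K) = 0 := CharTwo.two_eq_zero
  by_cases hPQ : P.xRep = Q.xRep
  · have hB : P.xRep 0 * Q.xRep 1 + P.xRep 1 * Q.xRep 0 = 0 := by
      rw [hPQ]; linear_combination (Q.xRep 0 * Q.xRep 1) * h2
    rw [hB]
    obtain ⟨c, hc, h0, h1⟩ := xRep_double hβ P
    rw [← hPQ]
    refine ⟨c, hc, ?_⟩
    rcases Point.eq_or_eq_neg_of_xRep_eq_xRep hPQ with rfl | rfl
    · rw [sub_self, h0, h1]
      simp only [Point.xRep_zero, Matrix.cons_val_zero, Matrix.cons_val_one]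
      refine ⟨?_, ?_, ?_⟩ <;> ring
    · have h3 : -Q - Q = -Q + -Q := sub_eq_add_neg _ _
      rw [neg_add_cancel, h3, h0, h1]
      simp only [Point.xRep_zero, Matrix.cons_val_zero, Matrix.cons_val_one]
      refine ⟨?_, ?_, ?_⟩ <;> ring
  · match P, Q with
    | 0, 0 => exact absurd rfl hPQ
    | 0, .some x y h =>
      rw [zero_add, zero_sub, Point.xRep_neg]
      refine ⟨1, one_ne_zero, ?_⟩
      simp
      grind
    | .some x y h, 0 =>
      rw [add_zero, sub_zero]
      refine ⟨1, one_ne_zero, ?_⟩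
      simp
      grind
    | .some x y h, .some x' y' h' =>
      have hx : x ≠ x' := by
        rintro rfl; exact hPQ (by simp)
      have hx0 : x + x' ≠ 0 := by grind
      have e := twist_equation h
      have e' := twist_equation h'
      have hs : x - x' = x + x' := by linear_combination (-x') * h2
      rw [sub_eq_add_neg, Point.neg_some, Point.add_of_X_ne hx, Point.add_of_X_ne hx]
      refine ⟨((x + x') ^ 2)⁻¹, by simp [hx0], ?_⟩
      rw [Point.xRep_some, Point.xRep_some, Point.xRep_some, Point.xRep_some,
        slope_of_X_ne hx, slope_of_X_ne hx]
      simp only [addX, negY, twist, Matrix.cons_val_zero, Matrix.cons_val_one, hs]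
      refine ⟨?_, ?_, ?_⟩
      · have hN : (y - y') * (y - y' + (x + x')) - (x + x') ^ 2 * D - x * (x + x') ^ 2
            - x' * (x + x') ^ 2 = x * y' + x' * y + x ^ 2 * x' + x * x' ^ 2 := by grind
        have hN' : (y + y' + x') * (y + y' + x' + (x + x')) - (x + x') ^ 2 * D
            - x * (x + x') ^ 2 - x' * (x + x') ^ 2
            = x * y' + x' * y + x ^ 2 * x' + x * x' ^ 2 + x * x' := by grind
        have hy : y - (-y' - 1 * x' - 0) = y + y' + x' := by ring
        rw [hy]
        field_simp
        rw [hN, hN']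
        grind
      · field_simp
        grind
      · field_simp
end Curve

open Polynomial

/-! ### Nonnegative integral quadratic forms -/

section Quadratic
variable {G : Type*} [AddCommGroup G] {h : G → ℤ}

lemma h_nsmul_add (hpar : ∀ P Q, h (P + Q) + h (P - Q) = 2 * h P + 2 * h Q) (P Q : G) (n : ℕ) :
    h (n • P + Q) = n ^ 2 * h P + n * (h (P + Q) - h P - h Q) + h Q := by
  induction n using Nat.twoStepInduction with
  | zero => simp
  | one => simp; ring
  | more n ih1 ih2 =>
    have := hpar ((n + 1) • P + Q) P
    rw [show (n + 1) • P + Q + P = (n + 2) • P + Q by rw [add_smul, add_smul]; abel_nf,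
      show (n + 1) • P + Q - P = n • P + Q by rw [add_smul]; abel_nf, ih1, ih2] at this
    push_cast at this ⊢
    linarith

/-- The discriminant inequality for a nonnegative function obeying the parallelogram law, on the
span of a vector `P` of value `1` and a vector `Q`. -/
lemma discr_le (hpar : ∀ P Q, h (P + Q) + h (P - Q) = 2 * h P + 2 * h Q)
    (hnn : ∀ P, 0 ≤ h P) (P Q : G) (hP : h P = 1) :
    (h (Q - P) - h Q - 1) ^ 2 ≤ 4 * h Q := by
  have h0 : h 0 = 0 := by have := hpar 0 0; simp at this; linarith
  have h2Q : h (2 • Q) = 4 * h Q := by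
    have := h_nsmul_add hpar Q 0 2; simp [h0] at this; linarith
  have hneg : h (-P) = h P := by have := hpar 0 P; simp [h0] at this; linarith
  set B := h (P + Q) - h P - h Q with hB
  have hQP : h (Q - P) - h Q - 1 = -B := by
    have := hpar Q P; rw [add_comm Q P] at this; linarith
  have e1 : h (P + 2 • Q) = 4 * h Q + 2 * B + 1 := by
    have := h_nsmul_add hpar Q P 2
    rw [add_comm, this, add_comm Q P, hP]; push_cast; linarith
  have e2 : h (-P + 2 • Q) = 4 * h Q - 2 * B + 1 := by
    have := hpar (2 • Q) P
    rw [add_comm _ P, h2Q, sub_eq_neg_add] at this; linarith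
  rw [hQP, neg_sq]
  -- In both cases the form is evaluated at `2 • Q - B • P`, where it equals `4 * h Q - B ^ 2`;
  -- this is twice the point of the line `Q + ℝ • P` at which the form is smallest.
  rcases le_total 0 B with hB0 | hB0
  · obtain ⟨n, hn⟩ := Int.eq_ofNat_of_zero_le hB0
    have := h_nsmul_add hpar (-P) (2 • Q) n
    rw [e2, h2Q, hneg, hP] at this
    have := hnn (n • -P + 2 • Q)
    rw [hn] at *
    nlinarith
  · obtain ⟨n, hn⟩ := Int.eq_ofNat_of_zero_le (neg_nonneg.2 hB0)
    have := h_nsmul_add hpar P (2 • Q) n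
    rw [e1, h2Q, hP] at this
    have := hnn (n • P + 2 • Q)
    have hn' : B = -n := by linarith
    rw [hn'] at *
    nlinarith
end Quadratic

/-! ### Heights of points of the projective line over `F(t)` -/

section Height

/-- A triple lying in no prime ideal generates the unit ideal. -/
lemma exists_bezout_three {R : Type*} [CommRing R] (f : Fin 3 → R)
    (H : ∀ M : Ideal R, M.IsPrime → ¬ ∀ i, f i ∈ M) :
    ∃ a : Fin 3 → R, ∑ i, a i * f i = 1 := by
  have : Ideal.span (Set.range f) = ⊤ := by
    by_contra hne
    obtain ⟨M, hM, hle⟩ := Ideal.exists_le_maximal _ hne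
    exact H M hM.isPrime fun i => hle (Ideal.subset_span ⟨i, rfl⟩)
  have h1 : (1 : R) ∈ Ideal.span (Set.range f) := by rw [this]; trivial
  exact Ideal.mem_span_range_iff_exists_fun.1 h1

variable {F : Type*} [Field F] {K : Type*} [Field K] [Algebra F[X] K] [IsFractionRing F[X] K]

/-- `n` is the degree of the triple `f`, the largest degree of its entries. The second clause
excludes the zero triple. -/
def HasDeg (n : ℕ) (f : Fin 3 → F[X]) : Prop :=
  (∀ i, (f i).natDegree ≤ n) ∧ ∃ i, (f i).coeff n ≠ 0

lemma HasDeg.le {n m : ℕ} {f : Fin 3 → F[X]} (hn : HasDeg n f) (hm : HasDeg m f) : n ≤ m := by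
  obtain ⟨i, hi⟩ := hn.2
  exact (le_natDegree_of_ne_zero hi).trans (hm.1 i)

/-- Two primitive triples that are proportional over the fraction field have the same degree, as
the factor of proportionality is a unit of `F[X]`. -/
lemma hasDeg_eq_of_proportional {n m : ℕ} {f g : Fin 3 → F[X]} (hn : HasDeg n f) (hm : HasDeg m g)
    (hf : ∃ a : Fin 3 → F[X], ∑ i, a i * f i = 1) (hg : ∃ a : Fin 3 → F[X], ∑ i, a i * g i = 1)
    (κ : K) (h : ∀ i, algebraMap F[X] K (f i) = κ * algebraMap F[X] K (g i)) : n = m := by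
  obtain ⟨a, ha⟩ := hf
  obtain ⟨b, hb⟩ := hg
  have inj := IsFractionRing.injective F[X] K
  have h1 : κ = algebraMap F[X] K (∑ i, b i * f i) := by
    have := congrArg (algebraMap F[X] K) hb
    simp only [map_sum, map_mul, map_one] at this ⊢
    simp only [h]
    calc κ = κ * ∑ i, algebraMap F[X] K (b i) * algebraMap F[X] K (g i) := by rw [this, mul_one]
      _ = _ := by
        rw [Finset.mul_sum]
        exact Finset.sum_congr rfl fun i _ => by ring
  set u := ∑ i, b i * f i
  have h2 : ∀ i, f i = u * g i := fun i => inj (by rw [h, h1, map_mul])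
  have h3 : IsUnit u := by
    refine IsUnit.of_mul_eq_one (∑ i, a i * g i) ?_
    rw [← ha, Finset.mul_sum]
    exact Finset.sum_congr rfl fun i _ => by rw [h2 i]; ring
  obtain ⟨c, hc, hcu⟩ := Polynomial.isUnit_iff.1 h3
  have hc0 : c ≠ 0 := hc.ne_zero
  have hd : HasDeg n g := by
    refine ⟨fun i => ?_, ?_⟩
    · have := hn.1 i
      rwa [h2, ← hcu, natDegree_C_mul hc0] at this
    · obtain ⟨i, hi⟩ := hn.2
      refine ⟨i, fun h0 => hi ?_⟩
      rw [h2, ← hcu, coeff_C_mul, h0, mul_zero]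
  exact le_antisymm (hd.le hm) (hm.le hd)

/-- The point of the projective line with homogeneous coordinates `v` has height `n`: a coprime
pair of polynomials representing it has maximal degree `n`. -/
def HasHeight (v : Fin 2 → K) (n : ℕ) : Prop :=
  ∃ p q : F[X], IsCoprime p q ∧ p.natDegree ≤ n ∧ q.natDegree ≤ n ∧
    (p.coeff n ≠ 0 ∨ q.coeff n ≠ 0) ∧
    ∃ κ : K, κ ≠ 0 ∧ algebraMap F[X] K p = κ * v 0 ∧ algebraMap F[X] K q = κ * v 1

lemma HasHeight.unique {v : Fin 2 → K} {n m : ℕ} (hn : HasHeight (F := F) v n)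
    (hm : HasHeight (F := F) v m) : n = m := by
  obtain ⟨p, q, ⟨a, b, hab⟩, hp, hq, hc, κ, hκ, h0, h1⟩ := hn
  obtain ⟨p', q', ⟨a', b', hab'⟩, hp', hq', hc', κ', hκ', h0', h1'⟩ := hm
  refine hasDeg_eq_of_proportional (K := K) (f := ![p, q, 0]) (g := ![p', q', 0]) ⟨?_, ?_⟩ ⟨?_, ?_⟩
    ⟨![a, b, 0], ?_⟩ ⟨![a', b', 0], ?_⟩ (κ / κ') ?_
  · simp [Fin.forall_fin_succ, hp, hq]
  · simpa [Fin.exists_fin_succ] using hc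
  · simp [Fin.forall_fin_succ, hp', hq']
  · simpa [Fin.exists_fin_succ] using hc'
  · simpa [Fin.sum_univ_three] using hab
  · simpa [Fin.sum_univ_three] using hab'
  · simp only [Fin.forall_fin_succ]
    simp [h0, h1, h0', h1']
    constructor <;> field_simp

omit [IsFractionRing F[X] K] in
lemma hasHeight_of_coprime {v : Fin 2 → K} {p q : F[X]} (hpq : IsCoprime p q)
    (h : ∃ κ : K, κ ≠ 0 ∧ algebraMap F[X] K p = κ * v 0 ∧ algebraMap F[X] K q = κ * v 1) :
    HasHeight (F := F) v (max p.natDegree q.natDegree) := by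
  refine ⟨p, q, hpq, le_max_left _ _, le_max_right _ _, ?_, h⟩
  by_contra hc
  simp only [not_or, not_not] at hc
  rcases le_total p.natDegree q.natDegree with hd | hd
  · rw [max_eq_right hd] at hc
    have hq : q = 0 := leadingCoeff_eq_zero.1 hc.2
    subst hq
    simp only [natDegree_zero, nonpos_iff_eq_zero] at hd
    rw [natDegree_zero] at hc
    replace hc := hc.1
    rw [← hd] at hc
    rw [leadingCoeff_eq_zero.1 hc] at hpq
    exact not_isCoprime_zero_zero hpq
  · rw [max_eq_left hd] at hc
    have hq : p = 0 := leadingCoeff_eq_zero.1 hc.1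
    subst hq
    simp only [natDegree_zero, nonpos_iff_eq_zero] at hd
    rw [natDegree_zero] at hc
    replace hc := hc.2
    rw [← hd] at hc
    rw [leadingCoeff_eq_zero.1 hc] at hpq
    exact not_isCoprime_zero_zero hpq

lemma exists_hasHeight {v : Fin 2 → K} (hv : v 1 = 1 ∨ v = ![1, 0]) :
    ∃ n, HasHeight (F := F) v n := by
  rcases hv with hv | rfl
  · obtain ⟨a, b, hab, h⟩ := IsFractionRing.exists_reduced_fraction (A := F[X]) (v 0)
    refine ⟨_, hasHeight_of_coprime (p := a) (q := b) hab.isCoprime ⟨algebraMap F[X] K b, ?_, ?_, ?_⟩⟩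
    · simp
    · rw [← h, mul_comm]; simp
    · simp [hv]
  · exact ⟨_, hasHeight_of_coprime (p := 1) (q := 0) isCoprime_one_left ⟨1, by simp⟩⟩

/-- The product of two nonzero binary linear forms is nonzero; used for the leading coefficients
in a symmetric square. -/
lemma sym_ne_zero {a b c d : F} (h1 : a ≠ 0 ∨ b ≠ 0) (h2 : c ≠ 0 ∨ d ≠ 0) :
    a * c ≠ 0 ∨ a * d + b * c ≠ 0 ∨ b * d ≠ 0 := by
  by_contra! h
  obtain ⟨z1, z2, z3⟩ := h
  rcases mul_eq_zero.1 z1 with z | z <;> rcases mul_eq_zero.1 z3 with z' | z' <;> simp_all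

/-- The parallelogram law for heights. If the symmetric square of `(v₃, v₄)` is proportional to
the three quadratic forms of `xRep_add_sub` evaluated at `(v₁, v₂)`, then both sides can be written
as primitive triples of polynomials, of degrees `n₃ + n₄` and `2 * (n₁ + n₂)`. -/
theorem height_parallelogram {β : F} (hβ : β ≠ 0) {v₁ v₂ v₃ v₄ : Fin 2 → K} {n₁ n₂ n₃ n₄ : ℕ}
    (h₁ : HasHeight (F := F) v₁ n₁) (h₂ : HasHeight (F := F) v₂ n₂)
    (h₃ : HasHeight (F := F) v₃ n₃) (h₄ : HasHeight (F := F) v₄ n₄)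
    (h : ∃ c : K, c ≠ 0 ∧
      v₃ 0 * v₄ 0 = c * ((v₁ 0 * v₂ 0) ^ 2 + algebraMap F[X] K (C β) * (v₁ 1 * v₂ 1) ^ 2) ∧
      v₃ 0 * v₄ 1 + v₃ 1 * v₄ 0 = c * ((v₁ 0 * v₂ 0) * (v₁ 1 * v₂ 1)) ∧
      v₃ 1 * v₄ 1 = c * (v₁ 0 * v₂ 1 + v₁ 1 * v₂ 0) ^ 2) :
    n₃ + n₄ = 2 * (n₁ + n₂) := by
  -- The symmetric square of two primitive pairs is primitive.
  have prim : ∀ (p q p' q' : F[X]), IsCoprime p q → IsCoprime p' q' → ∀ M : Ideal F[X], M.IsPrime →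
      p * p' ∈ M → p * q' + q * p' ∈ M → q * q' ∈ M → False := by
    intro p q p' q' ⟨a, b, hab⟩ ⟨a', b', hab'⟩ M hM h1 h2 h3
    have n1 : ¬ (p ∈ M ∧ q ∈ M) := fun ⟨hp, hq⟩ => hM.ne_top ((Ideal.eq_top_iff_one M).2
      (hab ▸ M.add_mem (M.mul_mem_left _ hp) (M.mul_mem_left _ hq)))
    have n2 : ¬ (p' ∈ M ∧ q' ∈ M) := fun ⟨hp, hq⟩ => hM.ne_top ((Ideal.eq_top_iff_one M).2
      (hab' ▸ M.add_mem (M.mul_mem_left _ hp) (M.mul_mem_left _ hq)))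
    rcases hM.mem_or_mem h1 with hp | hp
    · have hq : q ∉ M := fun hq => n1 ⟨hp, hq⟩
      have hq' : q' ∈ M := (hM.mem_or_mem h3).resolve_left hq
      have : q * p' ∈ M := (M.add_mem_iff_right (M.mul_mem_right _ hp)).1 h2
      exact n2 ⟨(hM.mem_or_mem this).resolve_left hq, hq'⟩
    · have hq : q' ∉ M := fun hq => n2 ⟨hp, hq⟩
      have hq' : q ∈ M := (hM.mem_or_mem h3).resolve_right hq
      have : p * q' ∈ M := (M.add_mem_iff_left (M.mul_mem_left _ hp)).1 h2
      exact n1 ⟨(hM.mem_or_mem this).resolve_right hq, hq'⟩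
  obtain ⟨p₁, q₁, c₁, dp₁, dq₁, l₁, κ₁, hκ₁, e₁, f₁⟩ := h₁
  obtain ⟨p₂, q₂, c₂, dp₂, dq₂, l₂, κ₂, hκ₂, e₂, f₂⟩ := h₂
  obtain ⟨p₃, q₃, c₃, dp₃, dq₃, l₃, κ₃, hκ₃, e₃, f₃⟩ := h₃
  obtain ⟨p₄, q₄, c₄, dp₄, dq₄, l₄, κ₄, hκ₄, e₄, f₄⟩ := h₄
  obtain ⟨c, hc, r0, r1, r2⟩ := h
  have dA : (p₁ * p₂).natDegree ≤ n₁ + n₂ := natDegree_mul_le_of_le dp₁ dp₂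
  have dB : (p₁ * q₂ + q₁ * p₂).natDegree ≤ n₁ + n₂ :=
    natDegree_add_le_of_degree_le (natDegree_mul_le_of_le dp₁ dq₂) (natDegree_mul_le_of_le dq₁ dp₂)
  have dC : (q₁ * q₂).natDegree ≤ n₁ + n₂ := natDegree_mul_le_of_le dq₁ dq₂
  refine hasDeg_eq_of_proportional (K := K)
    (f := ![p₃ * p₄, p₃ * q₄ + q₃ * p₄, q₃ * q₄])
    (g := ![(p₁ * p₂) ^ 2 + C β * (q₁ * q₂) ^ 2, (p₁ * p₂) * (q₁ * q₂), (p₁ * q₂ + q₁ * p₂) ^ 2])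
    ⟨?_, ?_⟩ ⟨?_, ?_⟩ (exists_bezout_three _ ?_) (exists_bezout_three _ ?_)
    (c * κ₃ * κ₄ / (κ₁ * κ₂) ^ 2) ?_
  · simp only [Fin.forall_fin_succ]
    simp [IsEmpty.forall_iff]
    exact ⟨natDegree_mul_le_of_le dp₃ dp₄, natDegree_add_le_of_degree_le
      (natDegree_mul_le_of_le dp₃ dq₄) (natDegree_mul_le_of_le dq₃ dp₄),
      natDegree_mul_le_of_le dq₃ dq₄⟩
  · simp only [Fin.exists_fin_succ]
    simp only [Matrix.cons_val_zero, Matrix.cons_val_succ, IsEmpty.exists_iff, or_false, coeff_add,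
      coeff_mul_add_eq_of_natDegree_le dp₃ dp₄, coeff_mul_add_eq_of_natDegree_le dp₃ dq₄,
      coeff_mul_add_eq_of_natDegree_le dq₃ dp₄, coeff_mul_add_eq_of_natDegree_le dq₃ dq₄]
    exact sym_ne_zero l₃ l₄
  · rw [two_mul]
    simp only [Fin.forall_fin_succ]
    simp [IsEmpty.forall_iff, pow_two]
    refine ⟨natDegree_add_le_of_degree_le (natDegree_mul_le_of_le dA dA) ?_,
      natDegree_mul_le_of_le dA dC, natDegree_mul_le_of_le dB dB⟩
    exact (natDegree_C_mul_le _ _).trans (natDegree_mul_le_of_le dC dC)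
  · rw [two_mul]
    simp only [Fin.exists_fin_succ]
    simp only [Matrix.cons_val_zero, Matrix.cons_val_succ, IsEmpty.exists_iff, or_false, coeff_add,
      coeff_C_mul, pow_two, coeff_mul_add_eq_of_natDegree_le dA dA,
      coeff_mul_add_eq_of_natDegree_le dA dC, coeff_mul_add_eq_of_natDegree_le dC dC,
      coeff_mul_add_eq_of_natDegree_le dB dB,
      coeff_mul_add_eq_of_natDegree_le dp₁ dp₂, coeff_mul_add_eq_of_natDegree_le dp₁ dq₂,
      coeff_mul_add_eq_of_natDegree_le dq₁ dp₂, coeff_mul_add_eq_of_natDegree_le dq₁ dq₂]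
    have := sym_ne_zero l₁ l₂
    by_contra! hcon
    obtain ⟨z1, z2, z3⟩ := hcon
    rw [mul_self_eq_zero] at z3
    rcases mul_eq_zero.1 z2 with z | z <;> rw [z] at z1 this <;> simp_all
  · intro M hM hall
    simp only [Fin.forall_fin_succ] at hall
    simp [IsEmpty.forall_iff] at hall
    exact prim _ _ _ _ c₃ c₄ M hM hall.1 hall.2.1 hall.2.2
  · intro M hM hall
    simp only [Fin.forall_fin_succ] at hall
    simp only [Matrix.cons_val_zero, Matrix.cons_val_succ, IsEmpty.forall_iff, and_true] at hall
    obtain ⟨a1, a2, a3⟩ := hall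
    have hB := hM.mem_of_pow_mem _ a3
    have hCu : IsUnit (C β) := isUnit_C.2 (isUnit_iff_ne_zero.2 hβ)
    have hA : p₁ * p₂ ∈ M ∧ q₁ * q₂ ∈ M := by
      rcases hM.mem_or_mem a2 with hA | hC
      · refine ⟨hA, ?_⟩
        have := (M.add_mem_iff_right (M.pow_mem_of_mem hA 2 two_pos)).1 a1
        exact hM.mem_of_pow_mem _ ((Ideal.unit_mul_mem_iff_mem M hCu).1 this)
      · refine ⟨?_, hC⟩
        have := (M.add_mem_iff_left (M.mul_mem_left _ (M.pow_mem_of_mem hC 2 two_pos))).1 a1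
        exact hM.mem_of_pow_mem _ this
    exact prim _ _ _ _ c₁ c₂ M hM hA.1 hB hA.2
  · simp only [Fin.forall_fin_succ]
    simp only [Matrix.cons_val_zero, Matrix.cons_val_succ, IsEmpty.forall_iff, and_true, map_add,
      map_mul, map_pow, e₁, f₁, e₂, f₂, e₃, f₃, e₄, f₄]
    refine ⟨?_, ?_, ?_⟩
    · field_simp
      linear_combination r0
    · field_simp
      linear_combination r1
    · field_simp
      linear_combination r2

end Height

/-! ### The discriminant inequality for heights on the curve -/

section Bound
variable {F : Type*} [Field F] [CharP F 2]

omit [CharP F 2] in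
lemma exists_height {K : Type*} [Field K] [Algebra F[X] K] [IsFractionRing F[X] K]
    {W : WeierstrassCurve.Affine K} (P : W.Point) : ∃ n, HasHeight (F := F) P.xRep n := by
  match P with
  | 0 => exact exists_hasHeight (Or.inr rfl)
  | .some x y h => exact exists_hasHeight (Or.inl rfl)

/-- Manin's inequality: for the height `h` of the `x`-coordinate,
`(h (Q - P) - h Q - 1) ^ 2 ≤ 4 * h Q` as soon as `h P = 1`. -/
lemma height_discr {K : Type*} [Field K] [DecidableEq K] [Algebra F[X] K] [IsFractionRing F[X] K]
    {β : F} (hβ : β ≠ 0) {D : K} (P Q : (twist D (algebraMap F[X] K (C β))).Point) {n m : ℕ}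
    (hP : HasHeight (F := F) P.xRep 1) (hQ : HasHeight (F := F) Q.xRep n)
    (hQP : HasHeight (F := F) (Q - P).xRep m) : ((m : ℤ) - n - 1) ^ 2 ≤ 4 * n := by
  have inj := IsFractionRing.injective F[X] K
  have : CharP K 2 := charP_of_injective_algebraMap inj 2
  have hβ' : algebraMap F[X] K (C β) ≠ 0 := by
    rw [Ne, map_eq_zero_iff _ inj, C_eq_zero]; exact hβ
  choose ht hht using fun P : (twist D (algebraMap F[X] K (C β))).Point => exists_height (F := F) P
  have hpar : ∀ P Q, (ht (P + Q) : ℤ) + ht (P - Q) = 2 * ht P + 2 * ht Q := by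
    intro P Q
    have := height_parallelogram hβ (hht P) (hht Q) (hht (P + Q)) (hht (P - Q))
      (xRep_add_sub hβ' P Q)
    zify at this
    linarith
  have := discr_le (h := fun P => (ht P : ℤ)) hpar (fun P => by positivity) P Q
    (by simp [(hht P).unique hP])
  simpa [(hht Q).unique hQ, (hht (Q - P)).unique hQP] using this
end Bound

/-! ### The homogenised trace and Artin–Schreier equations -/

section Trace

/-- The trace polynomial of `z / w` with denominators cleared:
`homTrace w z n = w ^ 2 ^ n * ∑ i < n, (z / w) ^ 2 ^ i`, a polynomial in `w` and `z`. -/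
def homTrace {R : Type*} [CommRing R] (w z : R) : ℕ → R
  | 0 => 0
  | n + 1 => w ^ 2 ^ n * (homTrace w z n + z ^ 2 ^ n)

/-- The Artin–Schreier relation `T ^ 2 + T = v ^ 2 ^ n + v` for `T = ∑ i < n, v ^ 2 ^ i` and
`v = z / w`, with denominators cleared. -/
lemma homTrace_sq {R : Type*} [CommRing R] [CharP R 2] (w z : R) (n : ℕ) :
    w * (homTrace w z n ^ 2 + w ^ 2 ^ n * homTrace w z n)
      = w * w ^ 2 ^ n * z ^ 2 ^ n + (w ^ 2 ^ n) ^ 2 * z := by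
  have h2 : (2 : R) = 0 := CharTwo.two_eq_zero
  induction n with
  | zero => simp only [homTrace]; linear_combination (-w ^ 2 * z) * h2
  | succ n ih =>
    simp only [homTrace, pow_succ 2 n, pow_mul]
    generalize w ^ 2 ^ n = u at *
    generalize z ^ 2 ^ n = v at *
    linear_combination u ^ 2 * ih + (u ^ 2 * w * homTrace w z n * v + u ^ 3 * v * w) * h2

lemma homTrace_mul {R : Type*} [CommRing R] (w v : R) (n : ℕ) :
    homTrace w (w * v) n = w ^ 2 ^ n * homTrace 1 v n := by
  induction n with
  | zero => simp [homTrace]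
  | succ n ih =>
    simp only [homTrace, ih, pow_succ 2 n, pow_mul]
    ring

lemma map_homTrace {R S : Type*} [CommRing R] [CommRing S] (f : R →+* S) (w z : R) (n : ℕ) :
    f (homTrace w z n) = homTrace (f w) (f z) n := by
  induction n with
  | zero => simp [homTrace]
  | succ n ih => simp [homTrace, ih]

lemma natDegree_homTrace_succ {F : Type*} [Field F] {z : F[X]} (hz : z.natDegree ≤ 2) (n : ℕ) :
    (homTrace X z (n + 1)).natDegree ≤ 3 * 2 ^ n := by
  have key : ∀ n, (homTrace X z n).natDegree ≤ 2 * 2 ^ n := by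
    intro n
    induction n with
    | zero => simp [homTrace]
    | succ n ih =>
      simp only [homTrace]
      refine (natDegree_mul_le_of_le (natDegree_X_pow_le _) (natDegree_add_le_of_degree_le ih
        ((natDegree_pow_le_of_le (2 ^ n) hz).trans (mul_comm _ _).le))).trans ?_
      rw [pow_succ]; lia
  simp only [homTrace]
  refine (natDegree_mul_le_of_le (natDegree_X_pow_le _) (natDegree_add_le_of_degree_le (key n)
        ((natDegree_pow_le_of_le (2 ^ n) hz).trans (mul_comm _ _).le))).trans ?_
  lia

lemma natDegree_homTrace_one {F : Type*} [Field F] (n : ℕ) :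
    (homTrace 1 (X : F[X]) n).degree < (2 ^ n : ℕ) := by
  induction n with
  | zero => simp [homTrace]
  | succ n ih =>
    simp only [homTrace, one_pow, one_mul]
    refine (degree_add_le _ _).trans_lt (max_lt (ih.trans ?_) ?_)
    · exact_mod_cast Nat.pow_lt_pow_right one_lt_two (Nat.lt_succ_self n)
    · rw [degree_X_pow]
      exact_mod_cast Nat.pow_lt_pow_right one_lt_two (Nat.lt_succ_self n)

variable {F : Type*} [Field F] [CharP F 2] [Fintype F] [DecidableEq F]

/-- Additive Hilbert 90 over a finite field: `w ^ 2 + w = v` is solvable exactly when `v` has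
trace zero. The image of `w ↦ w ^ 2 + w` has at least `2 ^ (r - 1)` elements and lies in the
kernel of the trace, which has at most `2 ^ (r - 1)` elements by degree. -/
lemma exists_artinSchreier_iff {r : ℕ} (hr : r ≠ 0) (hcard : Fintype.card F = 2 ^ r) (v : F) :
    (∃ w : F, w ^ 2 + w = v) ↔ homTrace 1 v r = 0 := by
  have h2 : (2 : F) = 0 := CharTwo.two_eq_zero
  obtain ⟨n, rfl⟩ := Nat.exists_eq_succ_of_ne_zero hr
  set I : Finset F := Finset.univ.image fun w : F => w ^ 2 + w with hI
  set Z : Finset F := Finset.univ.filter fun v : F => homTrace 1 v (n + 1) = 0 with hZ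
  have hsub : I ⊆ Z := by
    intro v hv
    obtain ⟨w, -, rfl⟩ := Finset.mem_image.1 hv
    rw [hZ, Finset.mem_filter]
    refine ⟨Finset.mem_univ _, ?_⟩
    have key : ∀ m, homTrace 1 (w ^ 2 + w) m = w ^ 2 ^ m + w := by
      intro m
      induction m with
      | zero => simp only [homTrace]; linear_combination (-w) * h2
      | succ m ih =>
        simp only [homTrace, ih, one_pow, one_mul, add_pow_char_pow]
        rw [← pow_mul, pow_succ, mul_comm 2]
        linear_combination w ^ 2 ^ m * h2
    rw [key, ← hcard, FiniteField.pow_card]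
    linear_combination w * h2
  have hIcard : 2 ^ n ≤ I.card := by
    have : (Finset.univ : Finset F).card ≤ 2 * I.card := by
      refine Finset.card_le_mul_card_image _ _ fun v hv => ?_
      obtain ⟨w, -, rfl⟩ := Finset.mem_image.1 hv
      refine (Finset.card_le_card (t := {w, w + 1}) fun u hu => ?_).trans Finset.card_le_two
      rw [Finset.mem_filter] at hu
      have : (u - w) * (u - (w + 1)) = 0 := by linear_combination hu.2 + (w^2 + w - w * u - u) * h2
      rcases mul_eq_zero.1 this with h | h <;> simp [sub_eq_zero.1 h]
    rw [Finset.card_univ, hcard, pow_succ] at this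
    lia
  have hZcard : Z.card ≤ 2 ^ n := by
    set f : F[X] := homTrace 1 X (n + 1) with hf
    have hfe : f = X ^ 2 ^ n + homTrace 1 X n := by rw [hf]; simp [homTrace, add_comm]
    have hdeg : f.natDegree = 2 ^ n := by
      rw [hfe]; exact natDegree_eq_of_degree_eq_some (by
        rw [degree_add_eq_left_of_degree_lt, degree_X_pow]
        rw [degree_X_pow]; exact natDegree_homTrace_one n)
    have hf0 : f ≠ 0 := by
      intro h0; rw [h0, natDegree_zero] at hdeg
      exact absurd hdeg (by positivity)
    rw [← hdeg]
    refine le_trans (Finset.card_le_card (t := f.roots.toFinset) fun v hv => ?_)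
      ((Multiset.toFinset_card_le _).trans (card_roots' f))
    rw [Multiset.mem_toFinset, mem_roots hf0, IsRoot.def, ← coe_evalRingHom, hf, map_homTrace]
    simpa [hZ] using hv
  have := Finset.eq_of_subset_of_card_le hsub (hZcard.trans hIcard)
  have hv := Finset.ext_iff.1 this v
  simpa [hI, hZ] using hv

end Trace

/-! ### The points `P`, `Q` and `Q - P` -/

section TwistPoints
variable {K : Type*} [Field K] [CharP K 2]

/-- The point `P = (t, B)` lies on the curve. -/
lemma twist_eq_base {t B : K} (ht : t ≠ 0) :
    B ^ 2 + t * B = t ^ 3 + (t + B / t) * t ^ 2 + B ^ 2 := by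
  have h2 : (2 : K) = 0 := CharTwo.two_eq_zero
  have e : B / t * t ^ 2 = B * t := by field_simp
  linear_combination -e - t ^ 3 * h2

/-- The point `Q = (u, B + s)`, with `u = t ^ q`, lies on the curve; `h` is `homTrace_sq` for the
trace `s`. -/
lemma twist_eq_frobenius {t B A s u : K} (ht : t ≠ 0)
    (h : t * (s ^ 2 + u * s) = t * u * (u ^ 2 + A * u + B) + u ^ 2 * (t ^ 2 + A * t + B)) :
    (B + s) ^ 2 + u * (B + s) = u ^ 3 + (t + B / t) * u ^ 2 + B ^ 2 := by
  have h2 : (2 : K) = 0 := CharTwo.two_eq_zero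
  have e : B / t * t = B := by field_simp
  refine mul_left_cancel₀ ht ?_
  linear_combination h - u ^ 2 * e + (t * B * s + t * u * B + A * t * u ^ 2) * h2

/-- The `x`-coordinate of `Q - P`. The slope of the chord is `c / g` once a factor `k` common to
`s + t` and `u + t` has been removed. -/
lemma twist_diff_x {t B s u g c k : K} (ht : t ≠ 0) (hu : u ≠ t)
    (hg : g * k = u + t) (hc : c * k = s + t) :
    t * (c ^ 2 + c * g) + B * g ^ 2 + t * u * g ^ 2 =
      t * g ^ 2 * (((B + s - (-B - 1 * t - 0)) / (u - t)) ^ 2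
        + 1 * ((B + s - (-B - 1 * t - 0)) / (u - t)) - (t + B / t) - u - t) := by
  have h2 : (2 : K) = 0 := CharTwo.two_eq_zero
  have hut : u - t = g * k := by rw [hg]; linear_combination (-t) * h2
  have hgk : g * k ≠ 0 := by rw [← hut]; exact sub_ne_zero.2 hu
  have hg0 := left_ne_zero_of_mul hgk
  have hk0 := right_ne_zero_of_mul hgk
  have hn : B + s - (-B - 1 * t - 0) = c * k := by rw [hc]; linear_combination B * h2
  have e : B / t * t = B := by field_simp
  have hl : c * k / (g * k) = c / g := by field_simp
  have e2 : c / g * g = c := by field_simp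
  rw [hn, hut, hl]
  generalize c / g = l at *
  generalize B / t = m at *
  subst e e2
  linear_combination (t * g ^ 2 * m  + t * u * g ^ 2 + t ^ 2 * g ^ 2) * h2

end TwistPoints

/-! ### The height of `Q - P` and the bound for `M` -/

section Frobenius
variable {F : Type*} [Field F] [CharP F 2] [Fintype F] [DecidableEq F]

/-- The `x`-coordinate of `Q - P` in lowest terms. Here `g` has as roots the `M` nonzero elements
of trace zero and `k` the remaining elements of `F`, so that `g * k = X ^ q + X`; at the roots of
`k` also `S + X` vanishes, by `homTrace_sq`. The degree of the numerator is found from its product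
with `k ^ 2`, which has leading term `X ^ (2 * q + 2)`. -/
lemma exists_reduced_form {r : ℕ} (hr : r ≠ 0) (hcard : Fintype.card F = 2 ^ r) {A b : F}
    (hb : b ≠ 0) {M : ℕ}
    (hM : M = (Finset.univ.filter fun a : F => a ≠ 0 ∧ homTrace a (a ^ 2 + A * a + b) r = 0).card) :
    ∃ g c k : F[X], g ≠ 0 ∧ k ≠ 0 ∧ g * k = X ^ 2 ^ r + X ∧
      c * k = homTrace X (X ^ 2 + C A * X + C b) r + X ∧
      IsCoprime (X * (c ^ 2 + c * g) + C b * g ^ 2 + X ^ (2 ^ r + 1) * g ^ 2) (X * g ^ 2) ∧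
      max (X * (c ^ 2 + c * g) + C b * g ^ 2 + X ^ (2 ^ r + 1) * g ^ 2).natDegree
        (X * g ^ 2).natDegree = 2 * M + 2 := by
  have h2 : (2 : F[X]) = 0 := CharTwo.two_eq_zero
  have h2F : (2 : F) = 0 := CharTwo.two_eq_zero
  set q := 2 ^ r with hq
  have hq2 : 2 ≤ q := by
    obtain ⟨n, rfl⟩ := Nat.exists_eq_succ_of_ne_zero hr
    rw [hq, pow_succ]; have := Nat.one_le_two_pow (n := n); lia
  set z : F[X] := X ^ 2 + C A * X + C b with hz
  set S : F[X] := homTrace X z r with hS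
  have hSev : ∀ a : F, S.eval a = homTrace a (a ^ 2 + A * a + b) r := by
    intro a
    rw [← coe_evalRingHom, hS, map_homTrace]
    simp [hz]
  set Z : Finset F := Finset.univ.filter fun a : F => a ≠ 0 ∧ homTrace a (a ^ 2 + A * a + b) r = 0
    with hZ
  set g : F[X] := ∏ a ∈ Z, (X - C a) with hg
  set k : F[X] := ∏ a ∈ Zᶜ, (X - C a) with hk
  have hgm : g.Monic := monic_prod_of_monic _ _ fun a _ => monic_X_sub_C a
  have hkm : k.Monic := monic_prod_of_monic _ _ fun a _ => monic_X_sub_C a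
  have hgd : g.natDegree = M := by rw [hg, hM]; simp
  have hgk : g * k = X ^ q + X := by
    rw [hg, hk, Finset.prod_mul_prod_compl, ← hcard]
    have hm : (X ^ Fintype.card F - X : F[X]).Monic :=
      monic_X_pow_sub (by rw [degree_X]; exact_mod_cast Fintype.one_lt_card)
    have h := prod_multiset_X_sub_C_of_monic_of_roots_card_eq hm (by
      rw [FiniteField.roots_X_pow_card_sub_X,
        FiniteField.X_pow_card_sub_X_natDegree_eq _ Fintype.one_lt_card]
      rfl)
    rw [FiniteField.roots_X_pow_card_sub_X] at h
    refine Eq.trans h ?_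
    linear_combination (-X) * h2
  have hkdvd : k ∣ S + X := by
    refine Finset.prod_dvd_of_coprime
      (fun a _ b _ hab => pairwise_coprime_X_sub_C Function.injective_id hab) fun a ha => ?_
    rw [dvd_iff_isRoot, IsRoot.def, eval_add, eval_X, hSev]
    have hid := homTrace_sq a (a ^ 2 + A * a + b) r
    rw [← hq, ← hcard, FiniteField.pow_card, FiniteField.pow_card] at hid
    by_cases ha0 : a = 0
    · subst ha0
      obtain ⟨n, rfl⟩ := Nat.exists_eq_succ_of_ne_zero hr
      simp [homTrace]
    · have hne : homTrace a (a ^ 2 + A * a + b) r ≠ 0 := by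
        intro h0; simp [hZ, ha0, h0] at ha
      have : a * homTrace a (a ^ 2 + A * a + b) r * (homTrace a (a ^ 2 + A * a + b) r + a) = 0 := by
        linear_combination hid + a ^ 2 * (a ^ 2 + A * a + b) * h2F
      exact (mul_eq_zero.1 this).resolve_left (mul_ne_zero ha0 hne)
  obtain ⟨c, hc⟩ := hkdvd
  have hcg : IsCoprime c g := by
    refine IsCoprime.prod_right fun a ha => ?_
    rw [isCoprime_comm, (irreducible_X_sub_C a).coprime_iff_not_dvd, dvd_iff_isRoot]
    intro hroot
    have := congrArg (eval a) hc
    rw [eval_mul, hroot.eq_zero, eval_add, hSev, eval_X] at this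
    simp only [hZ, Finset.mem_filter] at ha
    simp [ha.2.2, ha.2.1] at this
  have hXg : IsCoprime X g := by
    refine IsCoprime.prod_right fun a ha => ?_
    rw [irreducible_X.coprime_iff_not_dvd, X_dvd_iff]
    simp only [hZ, Finset.mem_filter] at ha
    simpa using ha.2.1
  have hbu : IsUnit (C b) := isUnit_C.2 (isUnit_iff_ne_zero.2 hb)
  refine ⟨g, c, k, hgm.ne_zero, hkm.ne_zero, hgk, by rw [hc, mul_comm], ?_, ?_⟩
  · refine IsCoprime.mul_right ?_ (IsCoprime.pow_right ?_)
    · have : X * (c ^ 2 + c * g) + C b * g ^ 2 + X ^ (q + 1) * g ^ 2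
        = C b * g ^ 2 + X * (c ^ 2 + c * g + X ^ q * g ^ 2) := by ring
      rw [this]
      exact IsCoprime.add_mul_left_left ((isCoprime_mul_unit_left_left hbu _ _).2 hXg.symm.pow_left) _
    · have : X * (c ^ 2 + c * g) + C b * g ^ 2 + X ^ (q + 1) * g ^ 2
        = X * c ^ 2 + g * (X * c + C b * g + X ^ (q + 1) * g) := by ring
      rw [this]
      exact IsCoprime.add_mul_left_left (hXg.mul_left hcg.pow_left) _
  · set N := X * (c ^ 2 + c * g) + C b * g ^ 2 + X ^ (q + 1) * g ^ 2 with hN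
    have hzq : z ^ q = X ^ (2 * q) + C A * X ^ q + C b := by
      rw [hz, hq, add_pow_char_pow, add_pow_char_pow, mul_pow, ← C_pow, ← C_pow, ← hq, ← hcard,
        FiniteField.pow_card, FiniteField.pow_card, pow_mul]
    have hid := homTrace_sq X z r
    rw [← hS, ← hq, hzq] at hid
    have hNk : N * k ^ 2 = X ^ (2 * q + 2) + (X ^ 2 * S + (C b * X ^ (q + 1) + X ^ (q + 2)
        + C b * X ^ 2 + X ^ (q + 3))) := by
      have e1 : N * k ^ 2 = X * ((S + X) ^ 2 + (S + X) * (g * k)) + C b * (g * k) ^ 2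
          + X ^ (q + 1) * (g * k) ^ 2 := by rw [hc, hN]; ring
      have e2 : (X : F[X]) ^ (2 * q) = (X ^ q) ^ 2 := by rw [mul_comm, pow_mul]
      rw [hz] at hid
      rw [e1, hgk, pow_add X (2 * q) 2, pow_succ X q, pow_add X q 2, pow_add X q 3]
      rw [e2] at hid ⊢
      linear_combination hid + (X ^ 3 + S * X ^ 2 + C b * X ^ q * X + (X ^ q) ^ 2 * X ^ 2
        + X * (X ^ q) ^ 3 + C A * X * (X ^ q) ^ 2 + (X ^ q) ^ 2 * C b) * h2
    have hSd : S.natDegree < 2 * q := by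
      obtain ⟨n, rfl⟩ := Nat.exists_eq_succ_of_ne_zero hr
      refine (natDegree_homTrace_succ (by rw [hz]; compute_degree) n).trans_lt ?_
      rw [hq, pow_succ]; have := Nat.one_le_two_pow (n := n); lia
    have hNkd : (N * k ^ 2).natDegree = 2 * q + 2 := by
      rw [hNk, natDegree_add_eq_left_of_natDegree_lt, natDegree_X_pow]
      rw [natDegree_X_pow, Nat.lt_succ_iff]
      refine natDegree_add_le_of_degree_le ?_ ?_
      · refine natDegree_mul_le.trans ?_
        rw [natDegree_X_pow]; lia
      · compute_degree
        lia
    have hgkd : M + k.natDegree = q := by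
      rw [← hgd, ← natDegree_mul hgm.ne_zero hkm.ne_zero, hgk]
      rw [natDegree_add_eq_left_of_natDegree_lt, natDegree_X_pow]
      rw [natDegree_X_pow, natDegree_X]; lia
    have hN0 : N ≠ 0 := by rintro h0; rw [h0] at hNkd; simp at hNkd
    rw [natDegree_mul hN0 (pow_ne_zero _ hkm.ne_zero), natDegree_pow] at hNkd
    rw [natDegree_mul X_ne_zero (pow_ne_zero _ hgm.ne_zero), natDegree_pow, natDegree_X, hgd]
    lia

/-- The Hasse bound for an ordinary curve in characteristic two; `2 * M + 2` is the number of
points of a smooth projective model of `w ^ 2 + w = (a ^ 2 + A * a + b) / a`. -/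
theorem ordinary_bound {r : ℕ} (hr : r ≠ 0) (hcard : Fintype.card F = 2 ^ r) {A b : F}
    (hb : b ≠ 0) {M : ℕ}
    (hM : M = (Finset.univ.filter fun a : F => a ≠ 0 ∧ homTrace a (a ^ 2 + A * a + b) r = 0).card) :
    ((2 * M + 2 : ℤ) - 2 ^ r - 1) ^ 2 ≤ 4 * 2 ^ r := by
  classical
  obtain ⟨g, c, k, hg0, hk0, hgk, hck, hcop, hdeg⟩ := exists_reduced_form hr hcard hb hM
  set q := 2 ^ r with hq
  set z : F[X] := X ^ 2 + C A * X + C b with hz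
  set S : F[X] := homTrace X z r with hS
  let K := FractionRing F[X]
  let φ : F[X] →+* K := algebraMap F[X] K
  have inj : Function.Injective φ := IsFractionRing.injective F[X] K
  have : CharP K 2 := charP_of_injective_algebraMap inj 2
  have h2 : (2 : K) = 0 := CharTwo.two_eq_zero
  have hβ : b ^ 2 ≠ 0 := pow_ne_zero _ hb
  have hβ' : φ (C (b ^ 2)) ≠ 0 := by
    rw [Ne, map_eq_zero_iff _ inj, C_eq_zero]; exact hβ
  have ht : φ X ≠ 0 := by rw [Ne, map_eq_zero_iff _ inj]; exact X_ne_zero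
  set t := φ X with ht'
  set B := φ (C b) with hB
  have hBB : φ (C (b ^ 2)) = B ^ 2 := by rw [C_pow, map_pow]
  set s := φ S with hs
  have hzq : z ^ q = X ^ (2 * q) + C A * X ^ q + C b := by
    rw [hz, hq, add_pow_char_pow, add_pow_char_pow, mul_pow, ← C_pow, ← C_pow, ← hq, ← hcard,
      FiniteField.pow_card, FiniteField.pow_card, pow_mul]
  have hid := congrArg φ (homTrace_sq X z r)
  rw [← hS, ← hq, hzq, hz] at hid
  simp only [map_add, map_mul, map_pow, ← ht', ← hB, ← hs] at hid
  have hP : (twist (t + B / t) (φ (C (b ^ 2)))).Nonsingular t B := by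
    refine nonsingular_twist hβ' ?_
    rw [hBB]
    exact twist_eq_base ht
  have hQ : (twist (t + B / t) (φ (C (b ^ 2)))).Nonsingular (t ^ q) (B + s) := by
    refine nonsingular_twist hβ' ?_
    rw [hBB]
    refine twist_eq_frobenius (A := φ (C A)) ht ?_
    rw [hid]; ring
  have hgk' := congrArg φ hgk
  have hck' := congrArg φ hck
  simp only [map_add, map_mul, map_pow, ← ht', ← hs] at hgk' hck'
  have hne : t ^ q ≠ t := by
    intro h0
    rw [h0, ← two_mul, h2, zero_mul] at hgk'
    rcases mul_eq_zero.1 hgk' with h | h <;> rw [map_eq_zero_iff _ inj] at h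
    exacts [hg0 h, hk0 h]
  have hPh : HasHeight (F := F) (K := K) (WeierstrassCurve.Affine.Point.some t B hP).xRep 1 := by
    have := hasHeight_of_coprime (v := (WeierstrassCurve.Affine.Point.some t B hP).xRep)
      (p := (X : F[X])) (q := 1) isCoprime_one_right ⟨1, by simp [ht', φ]⟩
    simpa using this
  have hQh : HasHeight (F := F) (K := K)
      (WeierstrassCurve.Affine.Point.some (t ^ q) (B + s) hQ).xRep q := by
    have := hasHeight_of_coprime
      (v := (WeierstrassCurve.Affine.Point.some (t ^ q) (B + s) hQ).xRep)
      (p := (X ^ q : F[X])) (q := 1) isCoprime_one_right ⟨1, by simp [ht', φ]⟩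
    simpa using this
  have hQPh : HasHeight (F := F) (K := K)
      (WeierstrassCurve.Affine.Point.some (t ^ q) (B + s) hQ -
        WeierstrassCurve.Affine.Point.some t B hP).xRep (2 * M + 2) := by
    rw [← hdeg]
    refine hasHeight_of_coprime hcop ⟨φ (X * g ^ 2), ?_, ?_, ?_⟩
    · rw [Ne, map_eq_zero_iff _ inj]
      exact mul_ne_zero X_ne_zero (pow_ne_zero _ hg0)
    · rw [sub_eq_add_neg, WeierstrassCurve.Affine.Point.neg_some,
        WeierstrassCurve.Affine.Point.add_of_X_ne hne, WeierstrassCurve.Affine.Point.xRep_some,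
        WeierstrassCurve.Affine.slope_of_X_ne hne]
      simp only [WeierstrassCurve.Affine.addX, WeierstrassCurve.Affine.negY, twist,
        Matrix.cons_val_zero]
      simp only [map_add, map_mul, map_pow, ← ht']
      rw [← twist_diff_x ht hne hgk' hck']
      ring
    · rw [sub_eq_add_neg, WeierstrassCurve.Affine.Point.neg_some,
        WeierstrassCurve.Affine.Point.add_of_X_ne hne, WeierstrassCurve.Affine.Point.xRep_some]
      simp [φ]
  have := height_discr hβ _ _ hPh hQh hQPh
  rw [hq] at this
  push_cast at this
  exact this

end Frobenius

/-! ### Counting points on the cubic -/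

section Count
variable {F : Type*} [Field F] [CharP F 2] [Fintype F] [DecidableEq F]

/-- Each `a ≠ 0` of trace zero has exactly two preimages `w` and `w + 1`. -/
lemma card_cover {r : ℕ} (hr : r ≠ 0) (hcard : Fintype.card F = 2 ^ r) (A b : F) :
    (Finset.univ.filter fun p : F × F =>
        p.1 ≠ 0 ∧ p.1 * (p.2 ^ 2 + p.2) = p.1 ^ 2 + A * p.1 + b).card =
      2 * (Finset.univ.filter fun a : F =>
        a ≠ 0 ∧ homTrace a (a ^ 2 + A * a + b) r = 0).card := by
  have h2 : (2 : F) = 0 := CharTwo.two_eq_zero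
  have key (a : F) (ha : a ≠ 0) : homTrace a (a ^ 2 + A * a + b) r = 0 ↔
      ∃ w : F, a * (w ^ 2 + w) = a ^ 2 + A * a + b := by
    have e : a * ((a ^ 2 + A * a + b) / a) = a ^ 2 + A * a + b := by field_simp
    rw [← e, homTrace_mul, mul_eq_zero, or_iff_right (pow_ne_zero _ ha),
      ← exists_artinSchreier_iff hr hcard]
    simp only [e, eq_div_iff ha, mul_comm a]
  rw [mul_comm 2]
  have hmaps : ∀ p ∈ Finset.univ.filter fun p : F × F =>
        p.1 ≠ 0 ∧ p.1 * (p.2 ^ 2 + p.2) = p.1 ^ 2 + A * p.1 + b,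
      p.1 ∈ Finset.univ.filter fun a : F =>
        a ≠ 0 ∧ homTrace a (a ^ 2 + A * a + b) r = 0 := by
    rintro ⟨a, w⟩ h
    simp only [Finset.mem_filter, Finset.mem_univ, true_and] at h ⊢
    exact ⟨h.1, (key a h.1).2 ⟨w, h.2⟩⟩
  rw [Finset.card_eq_sum_card_fiberwise hmaps]
  refine Finset.sum_const_nat fun a ha => ?_
  simp only [Finset.mem_filter, Finset.mem_univ, true_and] at ha
  obtain ⟨w, hw⟩ := (key a ha.1).1 ha.2
  have : (Finset.univ.filter fun p : F × F =>
      p.1 ≠ 0 ∧ p.1 * (p.2 ^ 2 + p.2) = p.1 ^ 2 + A * p.1 + b).filter (fun p => p.1 = a) =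
      {(a, w), (a, w + 1)} := by
    ext ⟨a', v⟩
    simp only [Finset.mem_filter, Finset.mem_univ, true_and, Finset.mem_insert,
      Finset.mem_singleton, Prod.mk.injEq]
    constructor
    · rintro ⟨⟨-, h⟩, rfl⟩
      have : a' * ((v - w) * (v - (w + 1))) = 0 := by
        linear_combination h - hw + a' * (w ^ 2 + w - w * v - v) * h2
      rcases mul_eq_zero.1 ((mul_eq_zero.1 this).resolve_left ha.1) with h | h
      · exact Or.inl ⟨rfl, sub_eq_zero.1 h⟩
      · exact Or.inr ⟨rfl, sub_eq_zero.1 h⟩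
    · rintro (⟨rfl, rfl⟩ | ⟨rfl, rfl⟩)
      · exact ⟨⟨ha.1, hw⟩, rfl⟩
      · exact ⟨⟨ha.1, by linear_combination hw + a' * (w + 1) * h2⟩, rfl⟩
  rw [this, Finset.card_pair]
  simp

omit [Fintype F] [DecidableEq F] in
/-- The cubic in the coordinates `s = x + y` and `w = x / s`. -/
lemma cubic_iff {γ s w : F} (hs : s ≠ 0) :
    γ * ((s * w) ^ 2 * (s * (w + 1)) + s * w * (s * (w + 1)) ^ 2) + (s * w) ^ 2 + s * w
        + (s * (w + 1)) ^ 2 + s * (w + 1) + (γ + 1) * (s * w) * (s * (w + 1)) = 0 ↔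
      s * (w ^ 2 + w) * (γ * s + γ + 1) + (s + 1) = 0 := by
  have h2 : (2 : F) = 0 := CharTwo.two_eq_zero
  rw [← mul_eq_zero_iff_left (a := s) (b := s * (w ^ 2 + w) * _ + _) hs]
  refine Eq.congr_left ?_
  linear_combination (γ * s ^ 3 * w ^ 2 * (w + 1) + s ^ 2 * (w ^ 2 + w) + s * w) * h2

omit [Fintype F] [DecidableEq F] in
/-- The cubic and the Artin–Schreier curve correspond under `a = A ^ 2 * (γ * s + γ + 1) / s`,
which equals `A ^ 2 * γ + A / s`. -/
lemma cover_iff {γ A a s w : F} (hs : s ≠ 0) (hA0 : A ≠ 0) (hA : A * (γ + 1) = 1)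
    (h : a * s = A ^ 2 * (γ * s + γ + 1)) :
    s * (w ^ 2 + w) * (γ * s + γ + 1) + (s + 1) = 0 ↔
      a * (w ^ 2 + w) = a ^ 2 + A * a + A ^ 4 * γ := by
  have h2 : (2 : F) = 0 := CharTwo.two_eq_zero
  have key : s ^ 2 * (a * (w ^ 2 + w) - (a ^ 2 + A * a + A ^ 4 * γ)) =
      A ^ 2 * (s * (w ^ 2 + w) * (γ * s + γ + 1) + (s + 1)) := by
    linear_combination (s * (w ^ 2 + w) - (a * s + A ^ 2 * (γ * s + γ + 1)) - A * s) * h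
      - A ^ 2 * (A * (γ * s + γ + 1) + γ * A * s + 1 + s + s ^ 2 * γ * A) * hA
      - A ^ 2 * (s + 1 + γ * A * s + s ^ 2 * γ * A) * h2
  rw [← sub_eq_zero (a := a * _), ← mul_eq_zero_iff_left (a := A ^ 2) (pow_ne_zero 2 hA0), ← key,
    mul_eq_zero_iff_left (pow_ne_zero 2 hs)]

/-- The cubic minus the origin is in bijection with the Artin–Schreier curve minus the two points
over `a = A ^ 2 * γ`. -/
lemma card_cubic_add_one {γ A : F} (hγ : γ ≠ 0) (hA : A * (γ + 1) = 1) :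
    (Finset.univ.filter fun p : F × F =>
        γ * (p.1 ^ 2 * p.2 + p.1 * p.2 ^ 2) + p.1 ^ 2 + p.1 + p.2 ^ 2 + p.2
          + (γ + 1) * p.1 * p.2 = 0).card + 1 =
      (Finset.univ.filter fun p : F × F =>
        p.1 ≠ 0 ∧ p.1 * (p.2 ^ 2 + p.2) = p.1 ^ 2 + A * p.1 + A ^ 4 * γ).card := by
  have h2 : (2 : F) = 0 := CharTwo.two_eq_zero
  have hA0 : A ≠ 0 := left_ne_zero_of_mul (hA.trans_ne one_ne_zero)
  set Sol := Finset.univ.filter fun p : F × F =>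
        γ * (p.1 ^ 2 * p.2 + p.1 * p.2 ^ 2) + p.1 ^ 2 + p.1 + p.2 ^ 2 + p.2
          + (γ + 1) * p.1 * p.2 = 0 with hSol
  set U := Finset.univ.filter fun p : F × F =>
        p.1 ≠ 0 ∧ p.1 * (p.2 ^ 2 + p.2) = p.1 ^ 2 + A * p.1 + A ^ 4 * γ with hU
  have h00 : (0, 0) ∈ Sol := by simp [hSol]
  have ha0 : A ^ 2 * γ ≠ 0 := mul_ne_zero (pow_ne_zero _ hA0) hγ
  have hz : (A ^ 2 * γ) ^ 2 + A * (A ^ 2 * γ) + A ^ 4 * γ = 0 := by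
    linear_combination (-A ^ 3 * γ) * hA + (A ^ 4 * γ ^ 2 + A ^ 4 * γ) * h2
  -- Over `a = A ^ 2 * γ` the right-hand side vanishes, so that `w` is `0` or `1`.
  have hfib : (U.filter fun p => p.1 = A ^ 2 * γ) = {(A ^ 2 * γ, 0), (A ^ 2 * γ, 1)} := by
    ext ⟨a, w⟩
    simp only [hU, Finset.mem_filter, Finset.mem_univ, true_and, Finset.mem_insert,
      Finset.mem_singleton, Prod.mk.injEq]
    constructor
    · rintro ⟨⟨-, h⟩, rfl⟩
      rw [hz, mul_eq_zero, or_iff_right ha0] at h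
      have : w * (w - 1) = 0 := by linear_combination h - w * h2
      rcases mul_eq_zero.1 this with h | h
      · exact Or.inl ⟨rfl, h⟩
      · exact Or.inr ⟨rfl, sub_eq_zero.1 h⟩
    · rintro (⟨rfl, rfl⟩ | ⟨rfl, rfl⟩)
      · exact ⟨⟨ha0, by rw [hz]; ring⟩, rfl⟩
      · exact ⟨⟨ha0, by rw [hz]; linear_combination A ^ 2 * γ * h2⟩, rfl⟩
  have hfc : (U.filter fun p => p.1 = A ^ 2 * γ).card = 2 := by
    rw [hfib, Finset.card_pair]; simp
  have hs : ∀ p ∈ Sol.erase (0, 0), p.1 + p.2 ≠ 0 := by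
    rintro ⟨x, y⟩ hp hs
    simp only [hSol, Finset.mem_erase, Finset.mem_filter, Finset.mem_univ, true_and, ne_eq] at hp
    have hy : y = x := by linear_combination hs - x * h2
    subst hy
    have : y ^ 2 = 0 := by
      linear_combination A * hp.2 - y ^ 2 * hA - A * (γ * y ^ 3 + y ^ 2 + y) * h2
    have : y = 0 := by simpa using this
    exact hp.1 (by rw [this])
  have hns : ∀ a, a ≠ A ^ 2 * γ → a + A ^ 2 * γ ≠ 0 := by
    intro a ha h
    exact ha (by linear_combination h - A ^ 2 * γ * h2)
  have hbij : (Sol.erase (0, 0)).card = (U.filter fun p => p.1 ≠ A ^ 2 * γ).card := by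
    refine Finset.card_nbij' (fun p => (A ^ 2 * γ + A / (p.1 + p.2), p.1 / (p.1 + p.2)))
      (fun p => (A / (p.1 + A ^ 2 * γ) * p.2, A / (p.1 + A ^ 2 * γ) * (p.2 + 1))) ?_ ?_ ?_ ?_
    · rintro ⟨x, y⟩ hp
      have hs := hs _ hp
      simp only [hSol, Finset.mem_coe, Finset.mem_erase, Finset.mem_filter, Finset.mem_univ,
        true_and] at hp hs
      obtain ⟨s, w, rfl, rfl⟩ : ∃ s w, x = s * w ∧ y = s * (w + 1) := by
        refine ⟨x + y, x / (x + y), by field_simp, ?_⟩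
        field_simp
        linear_combination (-x) * h2
      have es : s * w + s * (w + 1) = s := by linear_combination s * w * h2
      rw [es] at hs
      have hcub := (cubic_iff hs).1 hp.2
      have hn : γ * s + γ + 1 ≠ 0 := by
        intro h0
        rw [h0, mul_zero, zero_add] at hcub
        have : (1 : F) = 0 := by linear_combination h0 - γ * hcub
        exact one_ne_zero this
      have e : (A ^ 2 * γ + A / s) * s = A ^ 2 * (γ * s + γ + 1) := by
        field_simp
        linear_combination -hA
      have ew : s * w / s = w := by field_simp
      simp only [hU, Finset.mem_coe, Finset.mem_filter, Finset.mem_univ, true_and, es, ew]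
      refine ⟨⟨?_, (cover_iff hs hA0 hA e).1 hcub⟩, ?_⟩
      · exact left_ne_zero_of_mul (e.trans_ne (mul_ne_zero (pow_ne_zero _ hA0) hn))
      · simpa using ⟨hA0, hs⟩
    · rintro ⟨a, w⟩ hp
      simp only [hU, Finset.mem_coe, Finset.mem_filter, Finset.mem_univ, true_and] at hp
      have hs' := hns _ hp.2
      simp only [hSol, Finset.mem_coe, Finset.mem_erase, Finset.mem_filter, Finset.mem_univ,
        true_and, ne_eq, Prod.mk.injEq]
      set s := A / (a + A ^ 2 * γ) with hsd
      have hs0 : s ≠ 0 := div_ne_zero hA0 hs'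
      have e : a * s = A ^ 2 * (γ * s + γ + 1) := by
        have : s * (a + A ^ 2 * γ) = A := by rw [hsd]; field_simp
        linear_combination this - A * hA - A ^ 2 * γ * s * h2
      refine ⟨fun h => hs0 (by linear_combination h.2 - h.1), ?_⟩
      exact (cubic_iff hs0).2 ((cover_iff hs0 hA0 hA e).2 hp.1.2)
    · rintro ⟨x, y⟩ hp
      have hs := hs _ hp
      simp only at hs
      have e : A ^ 2 * γ + A / (x + y) + A ^ 2 * γ = A / (x + y) := by
        linear_combination A ^ 2 * γ * h2
      have e' : A / (A / (x + y)) = x + y := by field_simp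
      simp only [e, e', Prod.mk.injEq]
      refine ⟨by field_simp, ?_⟩
      field_simp
      linear_combination x * h2
    · rintro ⟨a, w⟩ hp
      simp only [hU, Finset.mem_coe, Finset.mem_filter, Finset.mem_univ, true_and] at hp
      have hs' := hns _ hp.2
      have e : A / (a + A ^ 2 * γ) * w + A / (a + A ^ 2 * γ) * (w + 1) = A / (a + A ^ 2 * γ) := by
        linear_combination A / (a + A ^ 2 * γ) * w * h2
      simp only [e, Prod.mk.injEq]
      refine ⟨?_, ?_⟩
      · field_simp
        linear_combination A ^ 2 * γ * h2
      · field_simp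
  have h1 := Finset.card_filter_add_card_filter_not (s := U) (fun p => p.1 = A ^ 2 * γ)
  have h3 := Finset.card_erase_add_one h00
  rw [hfc] at h1
  simp only [ne_eq] at hbij
  lia

end Count

end HasseTwo

/-- Hasse–Weil type bound for the number of affine points of a
non-singular cubic over F_q, q = 2^r ≡ 1 (mod 3). -/
theorem stmt4 (r : ℕ) (hr : r ≠ 0) (F : Type) [Field F] [Fintype F] [DecidableEq F]
    (hcard : Fintype.card F = 2 ^ r) (hmod : 2 ^ r % 3 = 1)
    (γ : F) (hγ0 : γ ≠ 0) (hγ1 : γ ≠ 1)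
    (R : ℕ)
    (hR : R = (Finset.univ.filter (fun p : F × F =>
        γ * (p.1 ^ 2 * p.2 + p.1 * p.2 ^ 2) + p.1 ^ 2 + p.1 + p.2 ^ 2 + p.2
          + (γ + 1) * p.1 * p.2 = 0)).card) :
    (2 ^ r : ℝ) - 2 * Real.sqrt (2 ^ r) - 2 ≤ (R : ℝ) ∧
      (R : ℝ) ≤ (2 ^ r : ℝ) + 2 * Real.sqrt (2 ^ r) - 2 := by
  have : CharP F 2 := by
    obtain ⟨p, hp⟩ := CharP.exists F
    obtain ⟨n, hpp, hn⟩ := FiniteField.card F p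
    have : p = 2 := by
      refine (Nat.prime_dvd_prime_iff_eq hpp Nat.prime_two).1 (hpp.dvd_of_dvd_pow (n := r) ?_)
      rw [← hcard, hn]
      exact dvd_pow_self _ n.ne_zero
    rwa [this] at hp
  have h2 : (2 : F) = 0 := CharTwo.two_eq_zero
  have hγ : γ + 1 ≠ 0 := fun h => hγ1 (by linear_combination h - h2)
  have hb : ((γ + 1)⁻¹) ^ 4 * γ ≠ 0 := mul_ne_zero (pow_ne_zero _ (inv_ne_zero hγ)) hγ0
  have hbound := HasseTwo.ordinary_bound hr hcard (A := (γ + 1)⁻¹) hb rfl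
  have hcount := HasseTwo.card_cubic_add_one hγ0 (inv_mul_cancel₀ hγ)
  rw [HasseTwo.card_cover hr hcard, ← hR] at hcount
  rw [← Nat.cast_ofNat (R := ℤ), ← Nat.cast_mul, ← hcount] at hbound
  have hreal : ((R : ℝ) + 2 - 2 ^ r) ^ 2 ≤ 4 * 2 ^ r := by
    push_cast at hbound
    have : ((R : ℤ) + 2 - 2 ^ r) ^ 2 ≤ 4 * 2 ^ r := by linarith
    exact_mod_cast this
  have h := Real.abs_le_sqrt hreal
  rw [Real.sqrt_mul (by norm_num), show (4 : ℝ) = 2 ^ 2 by norm_num,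
    Real.sqrt_sq (by norm_num), abs_le] at h
  constructor <;> linarith [h.1, h.2]
end

section
/- Let q = 5 and let (x₁,y₁), (x₂,y₂), (x₃,y₃) be three distinct elements of F_5² \ {(0,0)}. Then the 4×6 matrix over F_5 with first row (1,0,0,0,0,0) and rows (1, x_i, y_i, 2x_iy_i, x_i²+2y_i², x_i³+x_i²y_i+x_iy_i²−y_i³) for i = 1,2,3 has rank 4. -/
/-!
The row of the origin is the first unit vector and clears the constant coordinate of the other
rows, so rank 4 amounts to linear independence over `F_5` of the vectors `(x, y, 2xy, x² + 2y², T(x, y))` at three distinct nonzero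
points, where `T` is the cubic form `x³ + x²y + xy² − y³`. With `z = x + y√2 ∈ F_25` the first four
coordinates are those of `z` and `z²`.

If a dependence had a nonzero coefficient at the third point, then `z₃ = a z₁ + b z₂` for some
`a, b ∈ F_5`, and `(a z₁ + b z₂)² = a z₁² + b z₂²`, together with the same additivity for `T`.
The `5⁶` possibilities for `(a, b, z₁, z₂)` are checked in the kernel: the only solutions have two of
the points `0, z₁, z₂, z₃` equal (`core`). Hence the third coefficient vanishes (`coeff_eq_zero`),
and by symmetry so do all of them.
-/

/-- The cubic form giving the last coordinate of the point set; it is anisotropic over `F_5`. -/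
def cubicForm (x y : ZMod 5) : ZMod 5 := x ^ 3 + x ^ 2 * y + x * y ^ 2 - y ^ 3

/-- No point `a z₁ + b z₂` distinct from `0`, `z₁`, `z₂` satisfies the quadratic and cubic
conditions of a linear dependence. -/
theorem core : ∀ a b x₁ y₁ x₂ y₂ : ZMod 5,
    2 * (a * x₁ + b * x₂) * (a * y₁ + b * y₂) = a * (2 * x₁ * y₁) + b * (2 * x₂ * y₂) →
    (a * x₁ + b * x₂) ^ 2 + 2 * (a * y₁ + b * y₂) ^ 2 =
      a * (x₁ ^ 2 + 2 * y₁ ^ 2) + b * (x₂ ^ 2 + 2 * y₂ ^ 2) →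
    cubicForm (a * x₁ + b * x₂) (a * y₁ + b * y₂) =
      a * cubicForm x₁ y₁ + b * cubicForm x₂ y₂ →
    (x₁ = 0 ∧ y₁ = 0) ∨ (x₂ = 0 ∧ y₂ = 0) ∨ (x₁ = x₂ ∧ y₁ = y₂) ∨
    (a * x₁ + b * x₂ = 0 ∧ a * y₁ + b * y₂ = 0) ∨
    (a * x₁ + b * x₂ = x₁ ∧ a * y₁ + b * y₂ = y₁) ∨
    (a * x₁ + b * x₂ = x₂ ∧ a * y₁ + b * y₂ = y₂) := by
  decide +kernel

/-- In a linear dependence between the vectors of three distinct nonzero points, the last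
coefficient vanishes. -/
theorem coeff_eq_zero (x₁ y₁ x₂ y₂ x₃ y₃ c₁ c₂ c₃ : ZMod 5)
    (h1 : (x₁, y₁) ≠ (0, 0)) (h2 : (x₂, y₂) ≠ (0, 0)) (h3 : (x₃, y₃) ≠ (0, 0))
    (h12 : (x₁, y₁) ≠ (x₂, y₂)) (h13 : (x₁, y₁) ≠ (x₃, y₃)) (h23 : (x₂, y₂) ≠ (x₃, y₃))
    (ex : c₁ * x₁ + c₂ * x₂ + c₃ * x₃ = 0) (ey : c₁ * y₁ + c₂ * y₂ + c₃ * y₃ = 0)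
    (exy : c₁ * (2 * x₁ * y₁) + c₂ * (2 * x₂ * y₂) + c₃ * (2 * x₃ * y₃) = 0)
    (eq : c₁ * (x₁ ^ 2 + 2 * y₁ ^ 2) + c₂ * (x₂ ^ 2 + 2 * y₂ ^ 2)
      + c₃ * (x₃ ^ 2 + 2 * y₃ ^ 2) = 0)
    (ec : c₁ * cubicForm x₁ y₁ + c₂ * cubicForm x₂ y₂ + c₃ * cubicForm x₃ y₃ = 0) :
    c₃ = 0 := by
  by_contra hc
  have : Fact (Nat.Prime 5) := ⟨by norm_num⟩
  have solve : ∀ u v w : ZMod 5, c₁ * u + c₂ * v + c₃ * w = 0 →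
      w = (-c₁ / c₃) * u + (-c₂ / c₃) * v := by
    intro u v w h
    field_simp
    linear_combination h
  have hx := solve _ _ _ ex
  have hy := solve _ _ _ ey
  have hxy := solve _ _ _ exy
  have hq := solve _ _ _ eq
  have hT := solve _ _ _ ec
  have key := core (-c₁ / c₃) (-c₂ / c₃) x₁ y₁ x₂ y₂
  rw [← hx, ← hy] at key
  simp only [ne_eq, Prod.mk.injEq] at h1 h2 h3 h12 h13 h23
  rcases key hxy hq hT with h | h | h | h | h | h
  · exact h1 h
  · exact h2 h
  · exact h12 h
  · exact h3 h
  · exact h13 ⟨h.1.symm, h.2.symm⟩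
  · exact h23 ⟨h.1.symm, h.2.symm⟩

/-- rank-4 verification for the 25-point 4-general set of PG(5,5). -/
theorem stmt16 (x₁ y₁ x₂ y₂ x₃ y₃ : ZMod 5)
    (h1 : (x₁, y₁) ≠ (0, 0)) (h2 : (x₂, y₂) ≠ (0, 0)) (h3 : (x₃, y₃) ≠ (0, 0))
    (h12 : (x₁, y₁) ≠ (x₂, y₂)) (h13 : (x₁, y₁) ≠ (x₃, y₃)) (h23 : (x₂, y₂) ≠ (x₃, y₃)) :
    Matrix.rank
      !![1, 0, 0, 0, 0, 0;
         1, x₁, y₁, 2 * x₁ * y₁, x₁ ^ 2 + 2 * y₁ ^ 2,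
           x₁ ^ 3 + x₁ ^ 2 * y₁ + x₁ * y₁ ^ 2 - y₁ ^ 3;
         1, x₂, y₂, 2 * x₂ * y₂, x₂ ^ 2 + 2 * y₂ ^ 2,
           x₂ ^ 3 + x₂ ^ 2 * y₂ + x₂ * y₂ ^ 2 - y₂ ^ 3;
         1, x₃, y₃, 2 * x₃ * y₃, x₃ ^ 2 + 2 * y₃ ^ 2,
           x₃ ^ 3 + x₃ ^ 2 * y₃ + x₃ * y₃ ^ 2 - y₃ ^ 3] = 4 := by
  have : Fact (Nat.Prime 5) := ⟨by norm_num⟩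
  refine (LinearIndependent.rank_matrix ?_).trans (Fintype.card_fin 4)
  rw [Fintype.linearIndependent_iff]
  intro g hg
  have e := fun j => congrFun hg j
  simp only [Fin.sum_univ_four, Pi.add_apply, Pi.smul_apply, smul_eq_mul, Pi.zero_apply] at e
  have e0 := e 0
  have e1 := e 1
  have e2 := e 2
  have e3 := e 3
  have e4 := e 4
  have e5 := e 5
  simp [Matrix.row] at e0 e1 e2 e3 e4 e5
  have g3 : g 3 = 0 := coeff_eq_zero x₁ y₁ x₂ y₂ x₃ y₃ (g 1) (g 2) (g 3) h1 h2 h3 h12 h13 h23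
    e1 e2 e3 e4 e5
  have g2 : g 2 = 0 := coeff_eq_zero x₁ y₁ x₃ y₃ x₂ y₂ (g 1) (g 3) (g 2) h1 h3 h2 h13 h12 h23.symm
    (by linear_combination e1) (by linear_combination e2) (by linear_combination e3)
    (by linear_combination e4) (by unfold cubicForm; linear_combination e5)
  have g1 : g 1 = 0 := coeff_eq_zero x₃ y₃ x₂ y₂ x₁ y₁ (g 3) (g 2) (g 1) h3 h2 h1
    h23.symm h13.symm h12.symm
    (by linear_combination e1) (by linear_combination e2) (by linear_combination e3)
    (by linear_combination e4) (by unfold cubicForm; linear_combination e5)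
  have g0 : g 0 = 0 := by simpa [g1, g2, g3] using e0
  intro i
  fin_cases i
  exacts [g0, g1, g2, g3]
end
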